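/- Let (R, 𝔪) be a regular local ring and let x ∈ 𝔪 with x ∉ 𝔪². Let N be a finitely generated R-module, let N' be a finitely generated R/(x)-module, and suppose there is an injective R/(x)-linear map N/xN → N'. Then rank_R N ≤ rank_{R/(x)} N', where for a Noetherian local domain A and a finitely generated A-module M, rank_A M denotes the dimension of Frac(A) ⊗_A M as a vector space over the fraction field Frac(A). (Here R is a domain since it is regular local, and R/(x) is a domain since x ∈ 𝔪 ∖ 𝔪².) -/

import Mathlib

/-!
Rank is semicontinuous. Let `p` be a prime of a domain `R` and `N` a finitely generated `R`-module.
By Nakayama, `N_p` is generated over `R_p` by as many elements as the dimension of its fibre at the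
closed point. That fibre is the generic fibre of `N / pN` over `R / p`, while at most as many
elements of `N_p` are linearly independent as are needed to generate it. Hence
`rank_R N ≤ rank_{R/p} (N / pN)`, and the right-hand side can only grow along an injection.

That `R` and `R / (x)` are domains is an induction on the embedding dimension. An element
`x ∈ 𝔪 ∖ 𝔪²` is part of a minimal system of generators of `𝔪`, so `R / (x)` is again regular, and
by induction `(x)` is prime. Prime avoidance provides such an `x` outside all minimal primes. A
minimal prime `q ⊆ (x)` then satisfies `q = xq`, so `q = 0` by Nakayama.
-/

open scoped TensorProduct

/-- A Noetherian local ring is regular if its maximal ideal can be generated by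
`dim R` many elements. -/
def IsRegularLocal (R : Type*) [CommRing R] [IsLocalRing R] : Prop :=
  IsNoetherianRing R ∧ ∃ s : Finset R,
    Ideal.span (s : Set R) = IsLocalRing.maximalIdeal R ∧
    (s.card : WithBot (WithTop ℕ)) = ringKrullDim R

/-- For a domain `A`, the (generic) rank of a module `M`, namely the dimension of
`Frac(A) ⊗_A M` over the fraction field `Frac(A)`. -/
noncomputable def genericRank (A : Type*) [CommRing A]
    (M : Type*) [AddCommGroup M] [Module A M] : Cardinal :=
  Module.rank (FractionRing A) ((FractionRing A) ⊗[A] M)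


open IsLocalRing

theorem IsRegularLocal.isRegularLocalRing {R : Type*} [CommRing R] [IsLocalRing R]
    (hR : IsRegularLocal R) : IsRegularLocalRing R := by
  obtain ⟨_, s, hs, hcard⟩ := hR
  refine .of_spanFinrank_maximalIdeal_le R ?_
  rw [← hcard, ← hs, ← Set.ncard_coe_finset]
  exact Nat.cast_le.2 (Submodule.spanFinrank_span_le_ncard_of_finite s.finite_toSet)

section Generators

theorem exists_mem_span_insert_sdiff_singleton_eq {R M : Type*} [CommRing R] [IsLocalRing R]
    [AddCommGroup M] [Module R M] {s : Set M} {x : M} (hx : x ∈ Submodule.span R s)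
    (hx' : x ∉ maximalIdeal R • Submodule.span R s) :
    ∃ y ∈ s, Submodule.span R (insert x (s \ {y})) = Submodule.span R s := by
  classical
  obtain ⟨c, hcs, rfl⟩ := Submodule.mem_span_set.1 hx
  obtain ⟨y, hy, hunit⟩ : ∃ y ∈ c.support, IsUnit (c y) := by
    by_contra! hc
    exact hx' <| Submodule.sum_mem _ fun y hy ↦
      Submodule.smul_mem_smul ((mem_maximalIdeal _).2 (hc y hy))
        (Submodule.subset_span (hcs hy))
  set x := c.sum fun m r ↦ r • m with hxc
  set N := Submodule.span R (insert x (s \ {y}))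
  have mem_N {z : M} (hz : z ∈ s) (hzy : z ≠ y) : z ∈ N :=
    Submodule.subset_span (.inr ⟨hz, hzy⟩)
  have y_mem_N : y ∈ N := by
    have hsplit : c y • y = x - ∑ z ∈ c.support.erase y, c z • z := by
      rw [hxc, Finsupp.sum, ← Finset.add_sum_erase _ _ hy, add_sub_cancel_right]
    rw [← N.smul_mem_iff_of_isUnit hunit, hsplit]
    refine N.sub_mem (Submodule.subset_span (.inl rfl)) (N.sum_mem fun z hz ↦ ?_)
    exact N.smul_mem _ (mem_N (hcs (Finset.mem_of_mem_erase hz)) (Finset.ne_of_mem_erase hz))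
  refine ⟨y, hcs hy, le_antisymm ?_ (Submodule.span_le.2 fun z hz ↦ ?_)⟩
  · exact Submodule.span_le.2
      (Set.insert_subset hx (Set.sdiff_subset.trans Submodule.subset_span))
  · obtain rfl | hzy := eq_or_ne z y
    exacts [y_mem_N, mem_N hz hzy]

theorem spanFinrank_map_lt_of_map_eq_zero {R S : Type*} [CommRing R] [IsLocalRing R]
    [CommRing S] (f : R →+* S) {I : Ideal R} (hI : I.FG) {x : R} (hx : x ∈ I)
    (hx' : x ∉ maximalIdeal R * I) (hfx : f x = 0) :
    (I.map f).spanFinrank < I.spanFinrank := by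
  obtain ⟨s, hcard, hs⟩ := Submodule.FG.exists_span_finset_card_eq_spanFinrank hI
  obtain ⟨y, hy, hspan⟩ := exists_mem_span_insert_sdiff_singleton_eq (hs ▸ hx) (hs ▸ hx')
  have hmap : I.map f = Ideal.span (f '' (s \ {y})) := by
    rw [← hs, ← hspan, Ideal.submodule_span_eq, Ideal.map_span, Set.image_insert_eq, hfx,
      Ideal.span_insert_zero]
  have hfin : ((s : Set R) \ {y}).Finite := s.finite_toSet.sdiff
  calc (I.map f).spanFinrank
      ≤ (f '' (s \ {y})).ncard :=
        hmap ▸ Submodule.spanFinrank_span_le_ncard_of_finite (hfin.image f)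
    _ ≤ ((s : Set R) \ {y}).ncard := Set.ncard_image_le hfin
    _ < (s : Set R).ncard := Set.ncard_sdiff_singleton_lt_of_mem hy s.finite_toSet
    _ = I.spanFinrank := by rw [Set.ncard_coe_finset, hcard]

end Generators

section RegularLocalRing

theorem spanFinrank_maximalIdeal_quotient_span_singleton_lt {R : Type*} [CommRing R]
    [IsLocalRing R] [IsNoetherianRing R] {x : R} [IsLocalRing (R ⧸ Ideal.span {x})]
    (hx : x ∈ maximalIdeal R) (hx' : x ∉ maximalIdeal R ^ 2) :
    (maximalIdeal (R ⧸ Ideal.span {x})).spanFinrank < (maximalIdeal R).spanFinrank := by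
  rw [← map_maximalIdeal_of_surjective _ Ideal.Quotient.mk_surjective]
  exact spanFinrank_map_lt_of_map_eq_zero _ (maximalIdeal R).fg_of_isNoetherianRing hx
    (by rwa [← sq]) (Ideal.Quotient.mk_singleton_self x)

theorem isRegularLocalRing_quotient_span_singleton {R : Type*} [CommRing R]
    [IsRegularLocalRing R] {x : R} (hx : x ∈ maximalIdeal R) (hx' : x ∉ maximalIdeal R ^ 2) :
    IsRegularLocalRing (R ⧸ Ideal.span {x}) := by
  have : Nontrivial (R ⧸ Ideal.span {x}) :=
    Ideal.Quotient.nontrivial_iff.2 (Ideal.span_singleton_ne_top hx)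
  have := IsLocalRing.of_surjective' _ (Ideal.Quotient.mk_surjective (I := Ideal.span {x}))
  refine .of_spanFinrank_maximalIdeal_le _ ?_
  have hlt := spanFinrank_maximalIdeal_quotient_span_singleton_lt hx hx'
  have hdim : ringKrullDim R ≤ ringKrullDim (R ⧸ Ideal.span {x}) + 1 := by
    rw [← maximalIdeal_height_eq_ringKrullDim]
    exact Ideal.height_le_ringKrullDim_quotient_add_one hx
  refine ENat.WithBot.add_le_add_one_right_iff.1 ?_
  calc ((maximalIdeal (R ⧸ Ideal.span {x})).spanFinrank : WithBot ℕ∞) + 1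
      ≤ (maximalIdeal R).spanFinrank := by exact_mod_cast hlt
    _ = ringKrullDim R := IsRegularLocalRing.spanFinrank_maximalIdeal
    _ ≤ ringKrullDim (R ⧸ Ideal.span {x}) + 1 := hdim

theorem exists_mem_notMem_forall_notMem_of_not_le {R : Type*} [CommRing R] {I J : Ideal R}
    {S : Set (Ideal R)} (hS : S.Finite) (hprime : ∀ p ∈ S, p.IsPrime) (hJ : ¬ I ≤ J)
    (hle : ∀ p ∈ S, ¬ I ≤ p) : ∃ x ∈ I, x ∉ J ∧ ∀ p ∈ S, x ∉ p := by
  by_contra! hcover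
  have hsub : (I : Set R) ⊆ ⋃ p ∈ insert J S, id p := by
    intro x hx
    by_cases hxJ : x ∈ J
    · exact Set.mem_biUnion (Set.mem_insert J S) hxJ
    · obtain ⟨p, hp, hxp⟩ := hcover x hx hxJ
      exact Set.mem_biUnion (Set.mem_insert_of_mem J hp) hxp
  obtain ⟨p, rfl | hp, hIp⟩ := (Ideal.subset_union_prime_finite (hS.insert J) J J
    fun p hp hpJ _ ↦ hprime p (hp.resolve_left hpJ)).1 hsub
  exacts [hJ hIp, hle p hp hIp]

theorem isDomain_of_isPrime_span_singleton {R : Type*} [CommRing R] [IsNoetherianRing R]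
    {x : R} [hx : (Ideal.span {x}).IsPrime] (hjac : x ∈ Ring.jacobson R)
    (hmin : ∀ p ∈ minimalPrimes R, x ∉ p) : IsDomain R := by
  obtain ⟨p, hp, hpx⟩ := Ideal.exists_minimalPrimes_le (bot_le : ⊥ ≤ Ideal.span {x})
  have hprime : p.IsPrime := hp.1.1
  have hle : p ≤ Ideal.span {x} • p := by
    intro y hy
    obtain ⟨a, rfl⟩ := Ideal.mem_span_singleton.1 (hpx hy)
    exact Ideal.mul_mem_mul (Ideal.mem_span_singleton_self x)
      ((hprime.mem_or_mem hy).resolve_left (hmin p hp))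
  have hbot : p = ⊥ := Submodule.eq_bot_of_le_smul_of_le_jacobson_bot _ p
    p.fg_of_isNoetherianRing hle
    (by simpa [Ideal.span_le, Ideal.jacobson_bot] using hjac)
  subst hbot
  exact .of_bot_isPrime R

theorem exists_mem_maximalIdeal_notMem_sq_notMem_minimalPrimes {R : Type*} [CommRing R]
    [IsLocalRing R] [IsNoetherianRing R] (hR : maximalIdeal R ∉ minimalPrimes R) :
    ∃ x ∈ maximalIdeal R, x ∉ maximalIdeal R ^ 2 ∧ ∀ p ∈ minimalPrimes R, x ∉ p := by
  have not_le : ∀ p ∈ minimalPrimes R, ¬ maximalIdeal R ≤ p := by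
    intro p hp hle
    have hprime : p.IsPrime := hp.1.1
    exact hR (hle.antisymm (le_maximalIdeal hprime.ne_top) ▸ hp)
  refine exists_mem_notMem_forall_notMem_of_not_le (minimalPrimes.finite_of_isNoetherianRing R)
    (fun p hp ↦ hp.1.1) (fun hsq ↦ ?_) not_le
  have hbot : maximalIdeal R = ⊥ := Submodule.eq_bot_of_le_smul_of_le_jacobson_bot _ _
    (maximalIdeal R).fg_of_isNoetherianRing (by rwa [smul_eq_mul, ← sq])
    (jacobson_eq_maximalIdeal ⊥ bot_ne_top).ge
  obtain ⟨p, hp⟩ : Nonempty (minimalPrimes R) := Ideal.nonempty_minimalPrimes bot_ne_top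
  exact not_le p hp (hbot ▸ bot_le)

theorem isDomain_of_isRegularLocalRing (R : Type*) [CommRing R] [IsRegularLocalRing R] :
    IsDomain R := by
  induction hn : (maximalIdeal R).spanFinrank using Nat.strong_induction_on generalizing R with
  | _ n ih =>
    by_cases hmin : maximalIdeal R ∈ minimalPrimes R
    · have hzero : (maximalIdeal R).spanFinrank = 0 := by
        have hdim := IsRegularLocalRing.spanFinrank_maximalIdeal (R := R)
        rw [← maximalIdeal_height_eq_ringKrullDim, Ideal.height_eq_zero_iff.2 hmin] at hdim
        exact_mod_cast hdim
      rw [Submodule.spanFinrank_eq_zero_iff_eq_bot (maximalIdeal R).fg_of_isNoetherianRing] at hzero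
      exact (isField_iff_maximalIdeal_eq.2 hzero).isDomain
    · obtain ⟨x, hx, hxsq, hxmin⟩ :=
        exists_mem_maximalIdeal_notMem_sq_notMem_minimalPrimes hmin
      have hreg := isRegularLocalRing_quotient_span_singleton hx hxsq
      have hquot : IsDomain (R ⧸ Ideal.span {x}) :=
        ih _ (hn ▸ spanFinrank_maximalIdeal_quotient_span_singleton_lt hx hxsq) _ rfl
      have hprime : (Ideal.span {x}).IsPrime := (Ideal.Quotient.isDomain_iff_prime _).1 hquot
      exact isDomain_of_isPrime_span_singleton (by rwa [ringJacobson_eq_maximalIdeal]) hxmin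

theorem isPrime_span_singleton {R : Type*} [CommRing R] [IsRegularLocalRing R] {x : R}
    (hx : x ∈ maximalIdeal R) (hx' : x ∉ maximalIdeal R ^ 2) : (Ideal.span {x}).IsPrime :=
  have := isRegularLocalRing_quotient_span_singleton hx hx'
  (Ideal.Quotient.isDomain_iff_prime _).1 (isDomain_of_isRegularLocalRing _)

end RegularLocalRing

section Rank

theorem finrank_le_finrank_residueField_tensorProduct (A M : Type*) [CommRing A]
    [IsLocalRing A] [AddCommGroup M] [Module A M] [Module.Finite A M] :
    Module.finrank A M ≤ Module.finrank (ResidueField A) (ResidueField A ⊗[A] M) := by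
  let e : ResidueField A ⊗[A] (⊤ : Submodule A M) ≃ₗ[ResidueField A] ResidueField A ⊗[A] M :=
    Submodule.topEquiv.baseChange A (ResidueField A) _ _
  calc Module.finrank A M
      ≤ (⊤ : Submodule A M).spanFinrank :=
        Cardinal.toNat_le_toNat Submodule.rank_le_spanRank
          (Submodule.spanRank_finite_iff_fg.2 Module.Finite.fg_top)
    _ = (⊤ : Submodule (ResidueField A) (ResidueField A ⊗[A] (⊤ : Submodule A M))).spanFinrank :=
        (TensorProduct.spanFinrank_top_eq_of_residueField _ Module.Finite.fg_top).symm
    _ = Module.finrank (ResidueField A) (ResidueField A ⊗[A] (⊤ : Submodule A M)) :=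
        Module.finrank_eq_spanFinrank_of_free.symm
    _ = Module.finrank (ResidueField A) (ResidueField A ⊗[A] M) := e.finrank_eq

variable {R : Type*} [CommRing R] (p : Ideal R) [p.IsPrime]
  (M : Type*) [AddCommGroup M] [Module R M]

theorem finrank_residueField_tensorProduct :
    Module.finrank p.ResidueField (p.ResidueField ⊗[R] M) =
      Module.finrank (R ⧸ p) (M ⧸ p • (⊤ : Submodule R M)) := by
  let e : p.ResidueField ⊗[R ⧸ p] ((R ⧸ p) ⊗[R] M) ≃ₗ[p.ResidueField] p.ResidueField ⊗[R] M :=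
    TensorProduct.AlgebraTensorModule.cancelBaseChange R (R ⧸ p) p.ResidueField p.ResidueField M
  let e' : (R ⧸ p) ⊗[R] M ≃ₗ[R ⧸ p] M ⧸ p • (⊤ : Submodule R M) :=
    (TensorProduct.quotTensorEquivQuotSMul M p).extendScalarsOfSurjective
      Ideal.Quotient.mk_surjective
  rw [← e.finrank_eq, ← e'.finrank_eq,
    (TensorProduct.isBaseChange (R ⧸ p) ((R ⧸ p) ⊗[R] M) p.ResidueField).finrank_eq]

theorem rank_le_rank_quotient_smul_top [IsDomain R] [Module.Finite R M] :
    Module.rank R M ≤ Module.rank (R ⧸ p) (M ⧸ p • (⊤ : Submodule R M)) := by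
  let A := Localization.AtPrime p
  let e : p.ResidueField ⊗[A] (A ⊗[R] M) ≃ₗ[p.ResidueField] p.ResidueField ⊗[R] M :=
    TensorProduct.AlgebraTensorModule.cancelBaseChange R A p.ResidueField p.ResidueField M
  have : Module.Finite (R ⧸ p) (M ⧸ p • (⊤ : Submodule R M)) :=
    Module.Finite.of_restrictScalars_finite R _ _
  rw [← Module.finrank_eq_rank, ← Module.finrank_eq_rank, Nat.cast_le]
  calc Module.finrank R M
      = Module.finrank A (A ⊗[R] M) := (TensorProduct.isBaseChange R M A).finrank_eq.symm
    _ ≤ Module.finrank p.ResidueField (p.ResidueField ⊗[A] (A ⊗[R] M)) :=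
        finrank_le_finrank_residueField_tensorProduct A (A ⊗[R] M)
    _ = Module.finrank p.ResidueField (p.ResidueField ⊗[R] M) := e.finrank_eq
    _ = Module.finrank (R ⧸ p) (M ⧸ p • (⊤ : Submodule R M)) :=
        finrank_residueField_tensorProduct p M

end Rank

theorem genericRank_eq_lift_rank (A : Type u) [CommRing A] [IsDomain A] (M : Type v)
    [AddCommGroup M] [Module A M] : genericRank A M = Cardinal.lift.{u} (Module.rank A M) := by
  have hrank := (TensorProduct.isBaseChange A M (FractionRing A)).lift_rank_eq
  rw [← Cardinal.lift_inj.{_, v}, genericRank, hrank, Cardinal.lift_lift]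

theorem rank_le_of_quotient_injects_general {R : Type u} [CommRing R] [IsDomain R]
    {I : Ideal R} [I.IsPrime] {N : Type v} [AddCommGroup N] [Module R N] [Module.Finite R N]
    {N' : Type w} [AddCommGroup N'] [Module (R ⧸ I) N']
    (f : (N ⧸ I • (⊤ : Submodule R N)) →ₗ[R ⧸ I] N') (hf : Function.Injective f) :
    Cardinal.lift.{w} (genericRank R N) ≤ Cardinal.lift.{v} (genericRank (R ⧸ I) N') := by
  have hrank : Cardinal.lift.{w} (Module.rank R N) ≤ Cardinal.lift.{v} (Module.rank (R ⧸ I) N') :=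
    (Cardinal.lift_le.2 (rank_le_rank_quotient_smul_top I N)).trans
      (LinearMap.lift_rank_le_of_injective f hf)
  rw [genericRank_eq_lift_rank, genericRank_eq_lift_rank]
  simpa [Cardinal.lift_umax] using Cardinal.lift_le.{u}.2 hrank

/-- Let `(R, 𝔪)` be a regular local ring, `x ∈ 𝔪 ∖ 𝔪²`, `N` a finitely generated
`R`-module, `N'` a finitely generated `R/(x)`-module, and suppose `N/xN` injects
`R/(x)`-linearly into `N'`.  Then `rank_R N ≤ rank_{R/(x)} N'`. -/
theorem rank_le_of_quotient_injects {R : Type u} [CommRing R] [IsLocalRing R]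
    (hreg : IsRegularLocal R)
    {x : R} (hx : x ∈ IsLocalRing.maximalIdeal R)
    (hx2 : x ∉ (IsLocalRing.maximalIdeal R) ^ 2)
    {N : Type v} [AddCommGroup N] [Module R N] [Module.Finite R N]
    {N' : Type w} [AddCommGroup N'] [Module (R ⧸ Ideal.span {x}) N']
    [Module.Finite (R ⧸ Ideal.span {x}) N']
    (f : (N ⧸ (Ideal.span {x} • (⊤ : Submodule R N))) →ₗ[R ⧸ Ideal.span {x}] N')
    (hf : Function.Injective f) :
    Cardinal.lift.{w} (genericRank R N) ≤ Cardinal.lift.{v} (genericRank (R ⧸ Ideal.span {x}) N') := by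
  have := hreg.isRegularLocalRing
  have := isDomain_of_isRegularLocalRing R
  have := isPrime_span_singleton hx hx2
  exact rank_le_of_quotient_injects_general f hf
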